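/- arXiv:1907.00679 — 2 statements merged into one kernel-verified Lean document; each statement's English description precedes it below -/
import Mathlib

section
/- Let (X, τ) be a Hausdorff topological space with a countable network. If every subset of X is a Borel set, then 2^|X| ≤ 𝔠, where 𝔠 = 2^ℵ₀ is the cardinality of the continuum. -/
open MeasureTheory Cardinal

/-- A family `N` of subsets of a topological space is a *network* if every neighbourhood
of every point contains a member of `N` containing that point. -/
def IsNetwork {X : Type*} [TopologicalSpace X] (N : Set (Set X)) : Prop :=
  ∀ x : X, ∀ U : Set X, IsOpen U → x ∈ U → ∃ n ∈ N, x ∈ n ∧ n ⊆ U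

namespace IsNetwork

variable {X : Type*} [TopologicalSpace X] {N : Set (Set X)} {U : Set X}

theorem sUnion_subset_eq (hnet : IsNetwork N) (hU : IsOpen U) : ⋃₀ {n ∈ N | n ⊆ U} = U := by
  refine (Set.sUnion_subset fun _ hn ↦ hn.2).antisymm fun x hx ↦ ?_
  obtain ⟨n, hnN, hxn, hnU⟩ := hnet x U hU hx
  exact ⟨n, ⟨hnN, hnU⟩, hxn⟩

theorem borel_le_generateFrom (hnet : IsNetwork N) (hN : N.Countable) :
    borel X ≤ MeasurableSpace.generateFrom N := by
  refine MeasurableSpace.generateFrom_le fun U hU ↦ ?_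
  rw [← hnet.sUnion_subset_eq hU]
  exact .sUnion (hN.mono (Set.sep_subset _ _)) fun _ hn ↦
    MeasurableSpace.measurableSet_generateFrom hn.1

end IsNetwork

theorem two_pow_mk_le_continuum_of_forall_measurableSet_generateFrom {X : Type*}
    {S : Set (Set X)} (hS : #S ≤ continuum)
    (hmeas : ∀ s : Set X, MeasurableSet[MeasurableSpace.generateFrom S] s) :
    2 ^ #X ≤ continuum := by
  have huniv : {s | MeasurableSet[MeasurableSpace.generateFrom S] s} = Set.univ :=
    Set.eq_univ_of_forall hmeas
  calc 2 ^ #X = #(Set X) := mk_set.symm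
    _ = #{s | MeasurableSet[MeasurableSpace.generateFrom S] s} := by rw [huniv, mk_univ]
    _ ≤ continuum := MeasurableSpace.cardinal_measurableSet_le_continuum hS

theorem two_pow_card_le_continuum_of_every_subset_borel_general {X : Type*} [TopologicalSpace X]
    {N : Set (Set X)} (hN : N.Countable) (hnet : IsNetwork N)
    (hB : ∀ s : Set X, MeasurableSet[borel X] s) : 2 ^ #X ≤ continuum :=
  two_pow_mk_le_continuum_of_forall_measurableSet_generateFrom
    (hN.le_aleph0.trans aleph0_le_continuum)
    fun s ↦ hnet.borel_le_generateFrom hN s (hB s)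

/-- If a Hausdorff space `X` has a countable network and every subset of
`X` is Borel, then `2 ^ |X| ≤ 𝔠`. -/
theorem two_pow_card_le_continuum_of_every_subset_borel
    (X : Type u) [TopologicalSpace X] [T2Space X]
    (N : Set (Set X)) (hN : N.Countable) (hnet : IsNetwork N)
    (hB : ∀ s : Set X, MeasurableSet[borel X] s) :
    2 ^ Cardinal.mk X ≤ Cardinal.continuum.{u} :=
  two_pow_card_le_continuum_of_every_subset_borel_general hN hnet hB
end

section
/- Let K be a compact Hausdorff space. If every subset of K is a Borel set, then the Borel σ-algebra generated by the weak topology on C*(K) coincides with the Borel σ-algebra generated by the dual norm topology on C*(K), i.e. Bo(C*(K), w) = Bo(C*(K), ‖·‖). -/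
open NormedSpace MeasureTheory

/-- The weak topology on a normed space `E`: the topology induced by its topological dual. -/
noncomputable def weakTopology (E : Type*) [NormedAddCommGroup E] [NormedSpace ℝ E] :
    TopologicalSpace E :=
  TopologicalSpace.induced (fun x : E => fun Λ : StrongDual ℝ E => Λ x) Pi.topologicalSpace

/-!
If every subset of the compact Hausdorff space `K` is Borel, then every finite regular measure `ν`
on `K` is atomic. Indeed, if `ν` has no atoms, then `K` is covered, for each `n`, by the supports
of finitely many continuous functions, each support having measure less than `1 / n`. Let `S` be
the countable set of these functions. The evaluation map from `K` to the Polish space `S → ℝ` has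
null fibers, so by inner regularity the preimages of a Bernstein set and of its complement are both
null, and `ν = 0`. Hence `C*(K)` is isometric to `ℓ¹(K)`, where weak convergence together with
convergence of norms implies norm convergence. So the norm topology is the infimum of the weak
topology and of the second countable topology induced by the norm, and the norm is Borel for the
weak topology because it is weakly lower semicontinuous.
-/

open Filter Topology

universe u

section BorelInf

open TopologicalSpace

theorem borel_inf_of_secondCountable {X : Type*} (t₁ t₂ : TopologicalSpace X)
    (h₂ : @SecondCountableTopology X t₂) :
    @borel X (t₁ ⊓ t₂) = @borel X t₁ ⊔ @borel X t₂ := by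
  refine le_antisymm (MeasurableSpace.generateFrom_le fun s hs => ?_)
    (sup_le (borel_anti inf_le_left) (borel_anti inf_le_right))
  let basis := @countableBasis X t₂ h₂
  let W : Set X → Set X := fun b => ⋃₀ {V | IsOpen[t₁] V ∧ V ∩ b ⊆ s}
  have hs_eq : s = ⋃ b ∈ basis, W b ∩ b := by
    refine Set.Subset.antisymm (fun x hx => ?_) (Set.iUnion₂_subset fun b _ => ?_)
    · have hs_nhds : s ∈ @nhds X t₁ x ⊓ @nhds X t₂ x := by
        rw [← nhds_inf]
        exact @IsOpen.mem_nhds X (t₁ ⊓ t₂) x s hs hx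
      obtain ⟨u, hu, v, hv, rfl⟩ := mem_inf_iff.1 hs_nhds
      obtain ⟨b, hb, hxb, hbv⟩ := (@isBasis_countableBasis X t₂ h₂).mem_nhds_iff.1 hv
      obtain ⟨V, hVu, hV, hxV⟩ := (@mem_nhds_iff X t₁ x u).1 hu
      exact Set.mem_biUnion hb ⟨⟨V, ⟨hV, Set.inter_subset_inter hVu hbv⟩, hxV⟩, hxb⟩
    · rintro x ⟨⟨V, ⟨-, hVs⟩, hxV⟩, hxb⟩
      exact hVs ⟨hxV, hxb⟩
  have hW : ∀ b, IsOpen[t₁] (W b) := fun b => @isOpen_sUnion X t₁ _ fun V hV => hV.1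
  rw [hs_eq]
  refine .biUnion (@countable_countableBasis X t₂ h₂) fun b hb => .inter ?_ ?_
  · exact le_sup_left (a := @borel X t₁) _ (.basic _ (hW b))
  · exact le_sup_right (b := @borel X t₂) _
      (.basic _ (@isOpen_of_mem_countableBasis X t₂ h₂ b hb))

end BorelInf

section WeakTopology

variable {E F : Type*} [NormedAddCommGroup E] [NormedSpace ℝ E] [NormedAddCommGroup F]
  [NormedSpace ℝ F]

theorem continuous_weakTopology (Λ : StrongDual ℝ E) : Continuous[weakTopology E, _] Λ :=
  (@continuous_pi_iff E _ _ (weakTopology E) _ _).1 continuous_induced_dom Λ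

theorem le_weakTopology : UniformSpace.toTopologicalSpace ≤ weakTopology E :=
  continuous_iff_le_induced.1 (continuous_pi fun Λ => Λ.continuous)

theorem lowerSemicontinuous_norm_weakTopology :
    @LowerSemicontinuous E ℝ (weakTopology E) _ fun x => ‖x‖ := by
  let := weakTopology E
  intro x r hr
  obtain ⟨Λ, hΛ, hΛx⟩ := exists_dual_vector'' ℝ x
  filter_upwards [((continuous_weakTopology Λ).tendsto x).eventually_const_lt
    (hr.trans_eq hΛx.symm)] with y hy
  exact hy.trans_le <| (le_abs_self _).trans <| (Λ.le_of_opNorm_le hΛ y).trans_eq (one_mul _)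

theorem measurable_norm_weakTopology :
    @Measurable E ℝ (@borel E (weakTopology E)) _ fun x => ‖x‖ := by
  let := weakTopology E
  borelize E
  exact lowerSemicontinuous_norm_weakTopology.measurable

variable (E) in
/-- The Kadec property of a normed space: the weak topology and the norm topology coincide on
spheres. Stated for arbitrary filters, since sequences do not suffice for the weak topology. -/
def HasKadecProperty : Prop :=
  ∀ ⦃x : E⦄ ⦃l : Filter E⦄, (∀ Λ : StrongDual ℝ E, Tendsto Λ l (𝓝 (Λ x))) →
    Tendsto (fun y => ‖y‖) l (𝓝 ‖x‖) → l ≤ 𝓝 x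

theorem HasKadecProperty.weakTopology_inf_induced_norm (h : HasKadecProperty E) :
    weakTopology E ⊓ .induced (fun x : E => ‖x‖) inferInstance =
      UniformSpace.toTopologicalSpace := by
  have hweak (Λ : StrongDual ℝ E) :
      Continuous[weakTopology E ⊓ .induced (fun x : E => ‖x‖) inferInstance, _] Λ :=
    continuous_le_dom inf_le_left (continuous_weakTopology Λ)
  have hnorm : Continuous[weakTopology E ⊓ .induced (fun x : E => ‖x‖) inferInstance, _]
      fun x : E => ‖x‖ :=
    continuous_le_dom inf_le_right continuous_induced_dom
  exact le_antisymm
    (le_of_nhds_le_nhds fun x =>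
      h (fun Λ => @Continuous.tendsto E ℝ (_) _ _ (hweak Λ) x)
        (@Continuous.tendsto E ℝ (_) _ _ hnorm x))
    (le_inf le_weakTopology (continuous_iff_le_induced.1 continuous_norm))

theorem HasKadecProperty.borel_weakTopology_eq (h : HasKadecProperty E) :
    @borel E (weakTopology E) = borel E := by
  have hnorm : @borel E (.induced (fun x => ‖x‖) inferInstance) ≤ @borel E (weakTopology E) := by
    rw [borel_comap, ← BorelSpace.measurable_eq]
    exact measurable_norm_weakTopology.comap_le
  calc @borel E (weakTopology E)
    _ = @borel E (weakTopology E) ⊔ @borel E (.induced (fun x => ‖x‖) inferInstance) :=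
      (sup_eq_left.2 hnorm).symm
    _ = @borel E (weakTopology E ⊓ .induced (fun x => ‖x‖) inferInstance) :=
      (borel_inf_of_secondCountable _ _
        (TopologicalSpace.secondCountableTopology_induced E ℝ _)).symm
    _ = borel E := congrArg (@borel E) h.weakTopology_inf_induced_norm

theorem HasKadecProperty.of_linearIsometry (h : HasKadecProperty E) (L : F →ₗᵢ[ℝ] E) :
    HasKadecProperty F := by
  intro x l hl hnorm
  rw [L.isometry.isEmbedding.isInducing.nhds_eq_comap, ← map_le_iff_le_comap]
  refine h (fun Λ => hl (Λ ∘L L.toContinuousLinearMap)) (tendsto_map'_iff.2 ?_)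
  simpa only [Function.comp_def, L.norm_map] using hnorm

end WeakTopology

section Kadec

open scoped lp ENNReal

variable {ι : Type*} {G : ι → Type*} [∀ i, NormedAddCommGroup (G i)]

theorem hasSum_norm_lp_one (a : lp G 1) : HasSum (fun i => ‖a i‖) ‖a‖ := by
  simpa using lp.hasSum_norm (p := 1) (by simp) a

theorem tendsto_lp_one_of_tendsto_norm {α : Type*} {l : Filter α} {a : lp G 1} {b : α → lp G 1}
    (hcoord : ∀ i, Tendsto (fun t => b t i) l (𝓝 (a i)))
    (hnorm : Tendsto (fun t => ‖b t‖) l (𝓝 ‖a‖)) : Tendsto b l (𝓝 a) := by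
  -- As in Scheffé's lemma, the defect `‖b t i‖ - ‖b t i - a i‖` is dominated by `‖a i‖`.
  have hdefect : Tendsto (fun t => ∑' i, (‖b t i‖ - ‖b t i - a i‖)) l (𝓝 (∑' i, ‖a i‖)) := by
    refine tendsto_tsum_of_dominated_convergence (hasSum_norm_lp_one a).summable (fun i => ?_)
      (Eventually.of_forall fun t i => ?_)
    · simpa using (hcoord i).norm.sub ((hcoord i).sub_const (a i)).norm
    · simpa using abs_norm_sub_norm_le (b t i) (b t i - a i)
  have hdefect_eq (t : α) : ∑' i, (‖b t i‖ - ‖b t i - a i‖) = ‖b t‖ - ‖b t - a‖ :=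
    ((hasSum_norm_lp_one (b t)).sub (hasSum_norm_lp_one (b t - a))).tsum_eq
  simp only [hdefect_eq, (hasSum_norm_lp_one a).tsum_eq] at hdefect
  rw [tendsto_iff_norm_sub_tendsto_zero]
  simpa using hnorm.sub hdefect

theorem hasKadecProperty_lp_one : HasKadecProperty ℓ¹(ι, ℝ) := fun _ _ hweak hnorm =>
  tendsto_lp_one_of_tendsto_norm (b := id) (fun i => hweak (lp.evalCLM ℝ _ 1 i)) hnorm

end Kadec

section AtomicFunctionals

open scoped lp

variable {X : Type*} [TopologicalSpace X] [CompactSpace X]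

theorem norm_mul_apply_le (r : ℝ) (f : C(X, ℝ)) (x : X) : ‖r * f x‖ ≤ |r| * ‖f‖ := by
  rw [norm_mul]
  exact mul_le_mul_of_nonneg_left (f.norm_coe_le_norm x) (abs_nonneg r)

theorem summable_lp_one_mul (a : ℓ¹(X, ℝ)) (f : C(X, ℝ)) : Summable fun x => a x * f x :=
  .of_norm_bounded ((hasSum_norm_lp_one a).summable.mul_right ‖f‖) fun x =>
    norm_mul_apply_le (a x) f x

theorem norm_tsum_lp_one_mul_le (a : ℓ¹(X, ℝ)) (f : C(X, ℝ)) :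
    ‖∑' x, a x * f x‖ ≤ ‖a‖ * ‖f‖ :=
  tsum_of_norm_bounded ((hasSum_norm_lp_one a).mul_right ‖f‖) fun x => norm_mul_apply_le (a x) f x

variable (X) in
/-- The functional `f ↦ ∑ₓ a x * f x` on `C(X)`, that is, the purely atomic signed measure
`∑ₓ a x • δₓ` regarded as an element of `C*(X)`, as a function of `a`. -/
noncomputable def diracSeries : ℓ¹(X, ℝ) →L[ℝ] StrongDual ℝ C(X, ℝ) :=
  LinearMap.mkContinuous₂
    (LinearMap.mk₂ ℝ (fun a f => ∑' x, a x * f x)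
      (fun a b f => by
        simp [add_mul, (summable_lp_one_mul a f).tsum_add (summable_lp_one_mul b f)])
      (fun c a f => by simp [mul_assoc, tsum_mul_left])
      (fun a f g => by
        simp [mul_add, (summable_lp_one_mul a f).tsum_add (summable_lp_one_mul a g)])
      (fun c a f => by simp [mul_left_comm, tsum_mul_left]))
    1 fun a f => by simpa using norm_tsum_lp_one_mul_le a f

theorem norm_diracSeries_le (a : ℓ¹(X, ℝ)) : ‖diracSeries X a‖ ≤ ‖a‖ :=
  ContinuousLinearMap.opNorm_le_bound _ (norm_nonneg a) (norm_tsum_lp_one_mul_le a)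

theorem exists_continuousMap_norm_le_one_eqOn [T2Space X] (F : Finset X) {s : X → ℝ}
    (hs : ∀ x, |s x| ≤ 1) : ∃ f : C(X, ℝ), ‖f‖ ≤ 1 ∧ Set.EqOn f s F := by
  obtain ⟨f, hf, hfs⟩ := ContinuousMap.exists_restrict_eq_forall_mem_of_closed
    (s := (F : Set X)) ⟨fun x => s x, continuous_of_discreteTopology⟩
    (fun x => abs_le.1 (hs x)) (Set.nonempty_Icc.2 (by norm_num)) F.finite_toSet.isClosed
  exact ⟨f, (ContinuousMap.norm_le _ zero_le_one).2 fun x => abs_le.2 (hf x),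
    fun x hx => DFunLike.congr_fun hfs (⟨x, hx⟩ : (F : Set X))⟩

theorem two_mul_sum_abs_sub_norm_le [T2Space X] (a : ℓ¹(X, ℝ)) (F : Finset X) :
    2 * ∑ x ∈ F, |a x| - ‖a‖ ≤ ‖diracSeries X a‖ := by
  obtain ⟨f, hf, hfF⟩ := exists_continuousMap_norm_le_one_eqOn F
    (s := fun x => SignType.sign (a x)) fun x => by
      rcases lt_trichotomy (a x) 0 with h | h | h <;> simp [h]
  have hsum : HasSum (fun x => |a x| + a x * f x) (‖a‖ + diracSeries X a f) :=
    (hasSum_norm_lp_one a).add (summable_lp_one_mul a f).hasSum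
  have hnonneg (x : X) : 0 ≤ |a x| + a x * f x := by
    have h := (norm_mul_apply_le (a x) f x).trans (mul_le_of_le_one_right (abs_nonneg _) hf)
    linarith [neg_le_of_abs_le h]
  have hF : ∑ x ∈ F, (|a x| + a x * f x) = 2 * ∑ x ∈ F, |a x| := by
    rw [Finset.mul_sum]
    refine Finset.sum_congr rfl fun x hx => ?_
    rw [hfF hx, self_mul_sign, two_mul]
  have hle : diracSeries X a f ≤ ‖diracSeries X a‖ :=
    (le_abs_self _).trans ((diracSeries X a).unit_le_opNorm f hf)
  linarith [sum_le_hasSum F (fun x _ => hnonneg x) hsum]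

theorem norm_diracSeries [T2Space X] (a : ℓ¹(X, ℝ)) : ‖diracSeries X a‖ = ‖a‖ := by
  refine le_antisymm (norm_diracSeries_le a) ?_
  have hlim : Tendsto (fun F : Finset X => 2 * ∑ x ∈ F, |a x| - ‖a‖) atTop (𝓝 (2 * ‖a‖ - ‖a‖)) :=
    ((hasSum_norm_lp_one a).const_mul 2).sub_const ‖a‖
  linarith [le_of_tendsto' hlim (two_mul_sum_abs_sub_norm_le a)]

end AtomicFunctionals

section PositiveDecomposition

theorem posPart_smul_of_pos {V : Type*} [AddCommGroup V] [Lattice V] [Module ℝ V] [PosSMulMono ℝ V]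
    {c : ℝ} (hc : 0 < c) (u : V) : (c • u)⁺ = c • u⁺ :=
  (((OrderIso.smulRight hc).map_sup u 0).trans (congrArg _ (smul_zero c))).symm

variable {E : Type*} [NormedAddCommGroup E] [Lattice E] [HasSolidNorm E] [IsOrderedAddMonoid E]

theorem norm_posPart_add_le (u v : E) : ‖(u + v)⁺‖ ≤ ‖u⁺‖ + ‖v⁺‖ := by
  have h : (u + v)⁺ ≤ u⁺ + v⁺ :=
    sup_le (add_le_add (le_posPart u) (le_posPart v))
      (add_nonneg (posPart_nonneg u) (posPart_nonneg v))
  refine (norm_le_norm_of_abs_le_abs ?_).trans (norm_add_le _ _)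
  rw [abs_of_nonneg (posPart_nonneg _), abs_of_nonneg ((posPart_nonneg _).trans h)]
  exact h

variable [NormedSpace ℝ E] [IsOrderedModule ℝ E]

theorem exists_eq_sub_positiveLinearMap (φ : StrongDual ℝ E) :
    ∃ Λ₁ Λ₂ : E →ₚ[ℝ] ℝ, ∀ u, φ u = Λ₁ u - Λ₂ u := by
  -- Hahn–Banach extends `(u, -u) ↦ φ u` to a functional on `E × E` dominated by the sublinear `N`,
  -- which is positive because `N` vanishes on pairs of nonpositive elements.
  let antidiagonal : Submodule ℝ (E × E) := (LinearMap.fst ℝ E E + LinearMap.snd ℝ E E).ker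
  let N : E × E → ℝ := fun w => ‖φ‖ * (‖w.1⁺‖ + ‖w.2⁺‖)
  obtain ⟨g, hg, hgN⟩ := exists_extension_of_le_sublinear
    ((φ.toLinearMap ∘ₗ LinearMap.fst ℝ E E).toPMap antidiagonal) N
    (fun c hc w => by
      simp only [N, Prod.smul_fst, Prod.smul_snd, posPart_smul_of_pos hc, norm_smul,
        Real.norm_of_nonneg hc.le]
      ring)
    (fun w z => by
      simp only [N, Prod.fst_add, Prod.snd_add, ← mul_add]
      refine mul_le_mul_of_nonneg_left ?_ (norm_nonneg φ)
      linarith [norm_posPart_add_le w.1 z.1, norm_posPart_add_le w.2 z.2])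
    (by
      rintro ⟨⟨u, v⟩, huv⟩
      obtain rfl : -u = v := neg_eq_of_add_eq_zero_right huv
      have hu : ‖u‖ ≤ ‖u⁺‖ + ‖u⁻‖ := by
        conv_lhs => rw [← posPart_sub_negPart u]
        exact norm_sub_le _ _
      exact (le_abs_self _).trans (φ.le_opNorm_of_le hu))
  have hpos (u v : E) (hu : 0 ≤ u) (hv : 0 ≤ v) : 0 ≤ g (u, v) := by
    simpa only [N, map_neg, Prod.fst_neg, Prod.snd_neg, posPart_neg, negPart_of_nonneg hu,
      negPart_of_nonneg hv, norm_zero, add_zero, mul_zero, neg_nonpos] using hgN (-(u, v))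
  refine ⟨.mk₀ (g ∘ₗ LinearMap.inl ℝ E E) fun u hu => hpos u 0 hu le_rfl,
    .mk₀ (g ∘ₗ LinearMap.inr ℝ E E) fun v hv => hpos 0 v le_rfl hv, fun u => ?_⟩
  have hu : (u, -u) ∈ antidiagonal := add_neg_cancel u
  calc φ u = g (u, -u) := (hg ⟨_, hu⟩).symm
    _ = g ((u, 0) - (0, u)) := by simp
    _ = g (u, 0) - g (0, u) := map_sub g _ _

theorem hasSolidNorm_continuousMap (X : Type*) [TopologicalSpace X] [CompactSpace X] :
    HasSolidNorm C(X, ℝ) where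
  solid f g h := (ContinuousMap.norm_le f (norm_nonneg g)).2 fun x =>
    (h x).trans (g.norm_coe_le_norm x)

end PositiveDecomposition

section BernsteinSet

open Cardinal

theorem exists_injective_forall_mem_of_mk_le {ι Y : Type u} (S : ι → Set Y)
    (hS : ∀ i, #ι ≤ #(S i)) : ∃ g : ι → Y, Function.Injective g ∧ ∀ i, g i ∈ S i := by
  obtain ⟨r, hr, hord⟩ := exists_ord_eq ι
  have exists_new (i : ι) (f : ∀ j, r j i → Y) : ∃ y ∈ S i, ∀ j hj, f j hj ≠ y := by
    have hlt : #(Set.range fun j : {j // r j i} => f j j.2) < #(S i) :=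
      mk_range_le.trans_lt ((card_typein_lt i hord).trans_le (hS i))
    obtain ⟨y, hy, hyf⟩ := Set.not_subset.1 fun h => (mk_le_mk_of_subset h).not_gt hlt
    exact ⟨y, hy, fun j hj hfy => hyf ⟨⟨j, hj⟩, hfy⟩⟩
  choose next next_mem next_ne using exists_new
  let g : ι → Y := hr.wf.fix next
  have hg (i : ι) : g i = next i fun j _ => g j := hr.wf.fix_eq next i
  have hg_ne {i j : ι} (hij : r i j) : g i ≠ g j := fun h =>
    next_ne j (fun k _ => g k) i hij (h.trans (hg j))
  refine ⟨g, fun i j hij => ?_, fun i => hg i ▸ next_mem i _⟩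
  rcases trichotomous_of r i j with h | h | h
  exacts [absurd hij (hg_ne h), h, absurd hij.symm (hg_ne h)]

theorem mk_isClosed_le_continuum (Y : Type u) [TopologicalSpace Y] [SecondCountableTopology Y] :
    #{C : Set Y // IsClosed C} ≤ 𝔠 := by
  have hbasis : #(TopologicalSpace.countableBasis Y) ≤ 𝔠 :=
    (TopologicalSpace.countable_countableBasis Y).le_aleph0.trans aleph0_le_continuum
  refine (mk_le_mk_of_subset fun C hC => ?_).trans
    (MeasurableSpace.cardinal_measurableSet_le_continuum hbasis)
  rw [Set.mem_ofPred_eq, ← (TopologicalSpace.isBasis_countableBasis Y).borel_eq_generateFrom]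
  borelize Y
  exact IsClosed.measurableSet hC

theorem continuum_le_mk_of_isClosed {Y : Type u} [TopologicalSpace Y] [PolishSpace Y]
    {C : Set Y} (hC : IsClosed C) (hC_unc : ¬ C.Countable) : 𝔠 ≤ #C := by
  obtain ⟨f, hfC, -, hf⟩ := hC.exists_nat_bool_injection_of_not_countable hC_unc
  have h := lift_mk_le_lift_mk_of_injective
    (hf.codRestrict fun x => hfC (Set.mem_range_self x))
  simpa using h

/-- A Bernstein set: both it and its complement meet every uncountable closed set. -/
def IsBernsteinSet {Y : Type*} [TopologicalSpace Y] (B : Set Y) : Prop :=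
  ∀ C, IsClosed C → ¬ C.Countable → (C ∩ B).Nonempty ∧ (C ∩ Bᶜ).Nonempty

theorem IsBernsteinSet.compl {Y : Type*} [TopologicalSpace Y] {B : Set Y}
    (hB : IsBernsteinSet B) : IsBernsteinSet Bᶜ := fun C hC hC_unc => by
  simpa only [compl_compl] using (hB C hC hC_unc).symm

theorem IsBernsteinSet.countable_of_isClosed_of_subset {Y : Type*} [TopologicalSpace Y]
    {B C : Set Y} (hB : IsBernsteinSet B) (hC : IsClosed C) (hCB : C ⊆ B) : C.Countable := by
  by_contra hC_unc
  obtain ⟨y, hyC, hyB⟩ := (hB C hC hC_unc).2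
  exact hyB (hCB hyC)

theorem exists_isBernsteinSet (Y : Type u) [TopologicalSpace Y] [PolishSpace Y] :
    ∃ B : Set Y, IsBernsteinSet B := by
  let I := {C : {C : Set Y // IsClosed C} // ¬ (C : Set Y).Countable}
  have hI : #(I × Bool) ≤ 𝔠 := by
    rw [mk_prod, lift_uzero]
    exact mul_le_of_le aleph0_le_continuum ((mk_subtype_le _).trans (mk_isClosed_le_continuum Y))
      (lift_le_continuum.2 (mk_le_aleph0.trans aleph0_le_continuum))
  obtain ⟨g, hg_inj, hg_mem⟩ := exists_injective_forall_mem_of_mk_le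
    (fun p : I × Bool => (p.1 : Set Y))
    fun p => hI.trans (continuum_le_mk_of_isClosed p.1.1.2 p.1.2)
  refine ⟨Set.range fun i => g (i, true), fun C hC hC_unc => ?_⟩
  let i : I := ⟨⟨C, hC⟩, hC_unc⟩
  refine ⟨⟨g (i, true), hg_mem (i, true), i, rfl⟩, ⟨g (i, false), hg_mem (i, false), ?_⟩⟩
  rintro ⟨j, hj⟩
  simpa using hg_inj hj

end BernsteinSet

section NullFibers

variable {X Y : Type*} [TopologicalSpace X] [MeasurableSpace X] [TopologicalSpace Y]
  {ν : Measure X} [IsFiniteMeasure ν] [ν.InnerRegularCompactLTTop] {F : X → Y}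

theorem measure_preimage_eq_zero_of_forall_isClosed_countable [T2Space Y] (hF : Continuous F)
    (hfiber : ∀ y, ν (F ⁻¹' {y}) = 0) {D : Set Y} (hFD : MeasurableSet (F ⁻¹' D))
    (hD : ∀ C ⊆ D, IsClosed C → C.Countable) : ν (F ⁻¹' D) = 0 := by
  by_contra hpos
  obtain ⟨C, hCD, hC, hνC⟩ :=
    hFD.exists_lt_isCompact_of_ne_top (measure_ne_top ν _) (pos_iff_ne_zero.2 hpos)
  have hcountable : (F '' C).Countable :=
    hD _ (Set.image_subset_iff.2 hCD) (hC.image hF).isClosed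
  have hnull : ν (⋃ y ∈ F '' C, F ⁻¹' {y}) = 0 :=
    (measure_biUnion_null_iff hcountable).2 fun y _ => hfiber y
  rw [Set.biUnion_preimage_singleton] at hnull
  exact hνC.ne' (measure_mono_null (Set.subset_preimage_image F C) hnull)

theorem eq_zero_of_null_fibers [PolishSpace Y] [DiscreteMeasurableSpace X]
    (hF : Continuous F) (hfiber : ∀ y, ν (F ⁻¹' {y}) = 0) : ν = 0 := by
  obtain ⟨B, hB⟩ := exists_isBernsteinSet Y
  have hnull {D : Set Y} (hD : IsBernsteinSet D) : ν (F ⁻¹' D) = 0 :=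
    measure_preimage_eq_zero_of_forall_isClosed_countable hF hfiber .of_discrete
      fun _ hCD hC => hD.countable_of_isClosed_of_subset hC hCD
  rw [← Measure.measure_univ_eq_zero, ← Set.preimage_univ (f := F), ← Set.union_compl_self B]
  exact measure_union_null (hnull hB) (hnull hB.compl)

end NullFibers

section Atomless

variable {X : Type*} [TopologicalSpace X] [CompactSpace X] [T2Space X] [MeasurableSpace X]

theorem exists_continuousMap_measure_support_lt (ν : Measure X) [ν.OuterRegular]
    [NullSingletonClass ν] (x : X) {ε : ENNReal} (hε : 0 < ε) :
    ∃ f : C(X, ℝ), f x ≠ 0 ∧ ν (Function.support f) < ε := by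
  obtain ⟨U, hxU, hU, hUε⟩ := Set.exists_isOpen_lt_of_lt {x} ε (by rwa [measure_singleton (μ := ν)])
  obtain ⟨f, hf0, hf1, -⟩ := exists_continuous_zero_one_of_isClosed hU.isClosed_compl
    isClosed_singleton (Set.disjoint_compl_left_iff_subset.2 hxU)
  refine ⟨f, by simp [hf1 rfl], (measure_mono fun y hy => ?_).trans_lt hUε⟩
  by_contra hyU
  exact hy (hf0 hyU)

theorem exists_finset_continuousMap_measure_support_lt (ν : Measure X) [ν.OuterRegular]
    [NullSingletonClass ν] {ε : ENNReal} (hε : 0 < ε) :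
    ∃ S : Finset C(X, ℝ), ∀ x, ∃ f ∈ S, f x ≠ 0 ∧ ν (Function.support f) < ε := by
  classical
  choose f hf hfε using fun x => exists_continuousMap_measure_support_lt ν x hε
  obtain ⟨t, ht⟩ := isCompact_univ.elim_finite_subcover (fun x => Function.support (f x))
    (fun x => (f x).continuous.isOpen_support) fun x _ => Set.mem_iUnion.2 ⟨x, hf x⟩
  refine ⟨t.image f, fun x => ?_⟩
  obtain ⟨z, hz, hxz⟩ := Set.mem_iUnion₂.1 (ht (Set.mem_univ x))
  exact ⟨f z, Finset.mem_image_of_mem f hz, hxz, hfε z⟩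

theorem exists_countable_continuousMap_null_fibers (ν : Measure X) [ν.OuterRegular]
    [NullSingletonClass ν] :
    ∃ S : Set C(X, ℝ), S.Countable ∧ ∀ y, ν ((fun x (f : S) => (f : C(X, ℝ)) x) ⁻¹' {y}) = 0 := by
  choose S hS using fun n : ℕ =>
    exists_finset_continuousMap_measure_support_lt ν (ENNReal.inv_pos.2 (ENNReal.natCast_ne_top n))
  refine ⟨⋃ n, S n, Set.countable_iUnion fun n => (S n).countable_toSet, fun y => ?_⟩
  by_contra hpos
  obtain ⟨x, rfl⟩ := nonempty_of_measure_ne_zero hpos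
  obtain ⟨n, hn⟩ := ENNReal.exists_inv_nat_lt hpos
  obtain ⟨f, hfS, hfx, hfn⟩ := hS n x
  refine (hn.trans_le (measure_mono fun z hz => ?_)).not_gt hfn
  have hzx : f z = f x := congrFun hz ⟨f, Set.mem_iUnion_of_mem n hfS⟩
  exact hzx.trans_ne hfx

theorem eq_zero_of_nullSingletonClass [DiscreteMeasurableSpace X] (ν : Measure X)
    [IsFiniteMeasure ν] [ν.Regular] [NullSingletonClass ν] : ν = 0 := by
  obtain ⟨S, hS, hfiber⟩ := exists_countable_continuousMap_null_fibers ν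
  have := hS.to_subtype
  exact eq_zero_of_null_fibers (by fun_prop) hfiber

end Atomless

section AtomicMeasure

open scoped lp

theorem summable_measureReal_singleton {X : Type*} [MeasurableSpace X] [MeasurableSingletonClass X]
    (μ : Measure X) [IsFiniteMeasure μ] : Summable fun x => μ.real {x} :=
  ENNReal.summable_toReal <| ne_top_of_le_ne_top (measure_ne_top μ Set.univ) <|
    (tsum_meas_le_meas_iUnion_of_disjoint μ measurableSet_singleton
      fun _ _ hxy => Set.disjoint_singleton.2 hxy).trans (measure_mono (Set.subset_univ _))

variable {X : Type*} [TopologicalSpace X] [CompactSpace X] [T2Space X] [MeasurableSpace X]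
  [BorelSpace X]

open CompactlySupported in
theorem exists_regular_measure_eq_integral (Λ : C(X, ℝ) →ₚ[ℝ] ℝ) :
    ∃ μ : Measure X, IsFiniteMeasure μ ∧ μ.Regular ∧ ∀ f, Λ f = ∫ x, f x ∂μ := by
  let Λc : C_c(X, ℝ) →ₚ[ℝ] ℝ := .mk₀
    { toFun := fun f => Λ f.toContinuousMap
      map_add' := fun f g => map_add Λ f.toContinuousMap g.toContinuousMap
      map_smul' := fun c f => map_smul Λ c f.toContinuousMap }
    fun f hf => map_nonneg Λ (a := f.toContinuousMap) hf
  refine ⟨RealRMK.rieszMeasure Λc, inferInstance, inferInstance, fun f => ?_⟩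
  exact (RealRMK.integral_rieszMeasure Λc
    (CompactlySupportedContinuousMap.continuousMapEquiv f)).symm

variable [DiscreteMeasurableSpace X]

theorem ae_measureReal_singleton_ne_zero (μ : Measure X) [IsFiniteMeasure μ] [μ.Regular] :
    ∀ᵐ x ∂μ, μ.real {x} ≠ 0 := by
  let N : Set X := {x | μ.real {x} = 0}
  have hN : NullSingletonClass (μ.restrict N) := by
    refine ⟨fun x => ?_⟩
    rw [Measure.restrict_apply (.of_discrete)]
    by_cases hx : x ∈ N
    · exact measure_mono_null Set.inter_subset_left ((measureReal_eq_zero_iff (by finiteness)).1 hx)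
    · rw [Set.singleton_inter_eq_empty.2 hx, measure_empty]
  have : (μ.restrict N).Regular := .restrict_of_measure_ne_top (measure_ne_top μ N)
  have hμN : μ N = 0 := by
    rw [← Measure.restrict_eq_zero]
    exact eq_zero_of_nullSingletonClass _
  simpa only [ae_iff, not_not] using hμN

theorem integral_eq_tsum_measureReal_singleton (μ : Measure X) [IsFiniteMeasure μ]
    [μ.Regular] (f : C(X, ℝ)) :
    ∫ x, f x ∂μ = ∑' x, μ.real {x} * f x := by
  let atoms : Set X := Function.support fun x => μ.real {x}
  have hatoms : atoms.Countable := (summable_measureReal_singleton μ).countable_support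
  have hae : ∀ᵐ x ∂μ, x ∈ atoms := ae_measureReal_singleton_ne_zero μ
  have hf : Integrable f μ :=
    f.continuous.integrable_of_hasCompactSupport (HasCompactSupport.of_compactSpace _)
  calc ∫ x, f x ∂μ
    _ = ∫ x in atoms, f x ∂μ := by rw [Measure.restrict_eq_self_of_ae_mem hae]
    _ = ∑' x : atoms, μ.real {(x : X)} • f x := setIntegral_countable _ hatoms hf.integrableOn
    _ = ∑' x, μ.real {x} * f x :=
      tsum_subtype_eq_of_support_subset (f := fun x => μ.real {x} * f x) fun _ hx =>
        left_ne_zero_of_mul hx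

theorem exists_diracSeries_eq_integral (μ : Measure X) [IsFiniteMeasure μ] [μ.Regular] :
    ∃ a : ℓ¹(X, ℝ), ∀ f, diracSeries X a f = ∫ x, f x ∂μ := by
  have hmem : Memℓp (fun x => μ.real {x}) 1 :=
    memℓp_gen (by simpa [abs_of_nonneg] using summable_measureReal_singleton μ)
  exact ⟨⟨_, hmem⟩, fun f => (integral_eq_tsum_measureReal_singleton μ f).symm⟩

theorem surjective_diracSeries : Function.Surjective (diracSeries X) := by
  intro φ
  have := hasSolidNorm_continuousMap X
  obtain ⟨Λ₁, Λ₂, hφ⟩ := exists_eq_sub_positiveLinearMap φ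
  have exists_diracSeries_eq (Λ : C(X, ℝ) →ₚ[ℝ] ℝ) :
      ∃ a : ℓ¹(X, ℝ), ∀ f, diracSeries X a f = Λ f := by
    obtain ⟨μ, _, _, hμ⟩ := exists_regular_measure_eq_integral Λ
    simpa only [hμ] using exists_diracSeries_eq_integral μ
  obtain ⟨a, ha⟩ := exists_diracSeries_eq Λ₁
  obtain ⟨b, hb⟩ := exists_diracSeries_eq Λ₂
  refine ⟨a - b, ContinuousLinearMap.ext fun f => ?_⟩
  rw [map_sub, sub_apply, ha, hb, hφ]

theorem hasKadecProperty_strongDual_continuousMap : HasKadecProperty (StrongDual ℝ C(X, ℝ)) :=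
  hasKadecProperty_lp_one.of_linearIsometry
    (LinearIsometryEquiv.ofSurjective ⟨(diracSeries X).toLinearMap, norm_diracSeries⟩
      surjective_diracSeries).symm.toLinearIsometry

end AtomicMeasure

/-- If every subset of a compact Hausdorff space `K` is Borel, then the
weak Borel σ-algebra of `C*(K)` coincides with the norm Borel σ-algebra. -/
theorem weak_borel_eq_norm_borel_of_every_subset_borel
    (K : Type*) [TopologicalSpace K] [CompactSpace K] [T2Space K]
    (hB : ∀ s : Set K, MeasurableSet[borel K] s) :
    @borel (StrongDual ℝ C(K, ℝ)) (weakTopology (StrongDual ℝ C(K, ℝ))) = borel (StrongDual ℝ C(K, ℝ)) := by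
  let := borel K
  have : BorelSpace K := ⟨rfl⟩
  have : DiscreteMeasurableSpace K := ⟨hB⟩
  exact hasKadecProperty_strongDual_continuousMap.borel_weakTopology_eq
end
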